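/- arXiv:1504.07157 — 2 statements merged into one kernel-verified Lean document; each statement's English description precedes it below -/
import Mathlib

section
/- Let M be a locally compact Hausdorff topological space and let Γ be a group acting on M by homeomorphisms, such that the action is proper (for all compact subsets C, C' ⊆ M, the set { γ ∈ Γ : γ·C ∩ C' ≠ ∅ } is finite) and cocompact (the orbit space M/Γ with the quotient topology is compact). If every element of Γ fixes at least one point of M (i.e. every element is elliptic), then Γ has finite exponent: there exists an integer N ≥ 1 such that γ^N = 1 for every γ ∈ Γ. -/
open Pointwise

/-!
By cocompactness and local compactness, some compact set `K` meets every orbit, so every element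
with a fixed point is conjugate to one fixing a point of `K`. Properness leaves only finitely many
of the latter, and makes point stabilizers finite. The elements with a fixed point thus fall into
finitely many conjugacy classes of elements of finite order, and a product of these finitely many
orders is a common exponent.
-/

open MulAction

theorem exists_isCompact_subset_image_of_isOpenMap {X Y : Type*} [TopologicalSpace X]
    [TopologicalSpace Y] [WeaklyLocallyCompactSpace X] {f : X → Y} (hf : IsOpenMap f) {L : Set Y}
    (hL : IsCompact L) (hLf : L ⊆ Set.range f) : ∃ K : Set X, IsCompact K ∧ L ⊆ f '' K := by
  refine hL.induction_on (p := fun s ↦ ∃ K : Set X, IsCompact K ∧ s ⊆ f '' K)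
    ⟨∅, isCompact_empty, Set.empty_subset _⟩ ?mono ?union ?nhds
  case mono => exact fun s t hst ⟨K, hK, htK⟩ ↦ ⟨K, hK, hst.trans htK⟩
  case union =>
    rintro s t ⟨K, hK, hsK⟩ ⟨K', hK', htK'⟩
    exact ⟨K ∪ K', hK.union hK', Set.image_union f K K' ▸ Set.union_subset_union hsK htK'⟩
  case nhds =>
    intro y hy
    obtain ⟨x, rfl⟩ := hLf hy
    obtain ⟨K, hK, hKx⟩ := exists_compact_mem_nhds x
    exact ⟨f '' K, mem_nhdsWithin_of_mem_nhds (hf.image_mem_nhds hKx), K, hK, subset_rfl⟩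

theorem orderOf_eq_of_isConj {G : Type*} [Monoid G] {a b : G} (h : IsConj a b) :
    orderOf a = orderOf b := by
  refine orderOf_eq_orderOf_iff.2 fun n ↦ ⟨fun ha ↦ ?_, fun hb ↦ ?_⟩
  · exact isConj_one_right.1 (ha ▸ h.pow n)
  · exact isConj_one_left.1 (hb ▸ h.pow n)

theorem exists_pow_eq_one_of_finite_conjClasses {G : Type*} [Monoid G] {S : Set G}
    (hS : (ConjClasses.mk '' S).Finite) (hord : ∀ g ∈ S, IsOfFinOrder g) :
    ∃ N : ℕ, 0 < N ∧ ∀ g ∈ S, g ^ N = 1 := by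
  have hfin : (orderOf '' S).Finite := by
    refine (hS.image (Quotient.lift orderOf fun _ _ h ↦ orderOf_eq_of_isConj h)).subset ?_
    rintro _ ⟨g, hg, rfl⟩
    exact ⟨ConjClasses.mk g, Set.mem_image_of_mem _ hg, rfl⟩
  refine ⟨∏ n ∈ hfin.toFinset, n, Finset.prod_pos fun n hn ↦ ?_, fun g hg ↦ ?_⟩
  · obtain ⟨g, hg, rfl⟩ := hfin.mem_toFinset.1 hn
    exact (hord g hg).orderOf_pos
  · exact orderOf_dvd_iff_pow_eq_one.1
      (Finset.dvd_prod_of_mem _ (hfin.mem_toFinset.2 (Set.mem_image_of_mem _ hg)))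

/-- An element of a group acting on `M` is elliptic if it fixes a point of `M`. -/
def IsElliptic (M : Type*) {Γ : Type*} [Group Γ] [MulAction Γ M] (γ : Γ) : Prop :=
  (fixedBy M γ).Nonempty

section

variable {M Γ : Type*} [Group Γ] [MulAction Γ M]

theorem IsElliptic.exists_isConj_fixedBy_inter_nonempty {K : Set M}
    (hK : ∀ x : M, (orbit Γ x ∩ K).Nonempty) {γ : Γ} (hγ : IsElliptic M γ) :
    ∃ δ : Γ, IsConj δ γ ∧ (fixedBy M δ ∩ K).Nonempty := by
  obtain ⟨x, hx⟩ := hγ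
  obtain ⟨_, ⟨g, rfl⟩, hgx⟩ := hK x
  refine ⟨g * γ * g⁻¹, (isConj_iff.2 ⟨g, rfl⟩).symm, g • x, ?_, hgx⟩
  rw [← smul_fixedBy]
  exact Set.smul_mem_smul_set hx

variable [TopologicalSpace M]

variable (M Γ) in
theorem exists_isCompact_forall_orbit_inter_nonempty [WeaklyLocallyCompactSpace M]
    [ContinuousConstSMul Γ M] [CompactSpace (orbitRel.Quotient Γ M)] :
    ∃ K : Set M, IsCompact K ∧ ∀ x : M, (orbit Γ x ∩ K).Nonempty := by
  have hq : IsOpenQuotientMap (Quotient.mk (orbitRel Γ M)) := isOpenQuotientMap_quotientMk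
  obtain ⟨K, hK, hKq⟩ := exists_isCompact_subset_image_of_isOpenMap hq.isOpenMap isCompact_univ
    hq.surjective.range_eq.ge
  refine ⟨K, hK, fun x ↦ ?_⟩
  obtain ⟨y, hyK, hyx⟩ := hKq (Set.mem_univ (Quotient.mk _ x))
  exact ⟨y, orbitRel_apply.1 (Quotient.exact hyx), hyK⟩

variable [ProperlyDiscontinuousSMul Γ M]

theorem IsElliptic.isOfFinOrder {γ : Γ} (hγ : IsElliptic M γ) : IsOfFinOrder γ := by
  obtain ⟨x, hx⟩ := hγ
  have hfin : Finite (stabilizer Γ x) := ProperlyDiscontinuousSMul.finite_stabilizer x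
  exact Submonoid.isOfFinOrder_coe.2 (isOfFinOrder_of_finite (⟨γ, hx⟩ : stabilizer Γ x))

variable (Γ) in
theorem finite_setOf_fixedBy_inter_nonempty {K : Set M} (hK : IsCompact K) :
    {γ : Γ | (fixedBy M γ ∩ K).Nonempty}.Finite :=
  (ProperlyDiscontinuousSMul.finite_disjoint_inter_image hK hK).subset
    fun _ ⟨x, hx, hxK⟩ ↦ ⟨x, ⟨x, hxK, hx⟩, hxK⟩

variable (M Γ) in
theorem finite_conjClasses_setOf_isElliptic [WeaklyLocallyCompactSpace M]
    [ContinuousConstSMul Γ M] [CompactSpace (orbitRel.Quotient Γ M)] :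
    (ConjClasses.mk '' {γ : Γ | IsElliptic M γ}).Finite := by
  obtain ⟨K, hK, hKorbit⟩ := exists_isCompact_forall_orbit_inter_nonempty M Γ
  refine ((finite_setOf_fixedBy_inter_nonempty Γ hK).image ConjClasses.mk).subset ?_
  rintro _ ⟨γ, hγ, rfl⟩
  obtain ⟨δ, hδγ, hδK⟩ := hγ.exists_isConj_fixedBy_inter_nonempty hKorbit
  exact ⟨δ, hδK, ConjClasses.mk_eq_mk_iff_isConj.2 hδγ⟩

end

theorem proper_cocompact_action_all_elliptic_finite_exponent_general
    (M Γ : Type*) [TopologicalSpace M] [WeaklyLocallyCompactSpace M] [Group Γ] [MulAction Γ M]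
    [ContinuousConstSMul Γ M] [ProperlyDiscontinuousSMul Γ M]
    [CompactSpace (orbitRel.Quotient Γ M)] :
    ∃ N : ℕ, 0 < N ∧ ∀ γ : Γ, IsElliptic M γ → γ ^ N = 1 :=
  exists_pow_eq_one_of_finite_conjClasses (finite_conjClasses_setOf_isElliptic M Γ)
    fun _ ↦ IsElliptic.isOfFinOrder

/-- If a group `Γ` acts properly and cocompactly by homeomorphisms on a locally
compact Hausdorff space `M` and every element of `Γ` fixes at least one point
(every element is elliptic), then `Γ` has finite exponent. -/
theorem proper_cocompact_action_all_elliptic_finite_exponent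
    {M : Type*} [TopologicalSpace M] [T2Space M] [LocallyCompactSpace M]
    (Γ : Type*) [Group Γ] [MulAction Γ M]
    (hcont : ∀ γ : Γ, Continuous (fun x : M => γ • x))
    (hproper : ∀ C C' : Set M, IsCompact C → IsCompact C' →
      {γ : Γ | (γ • C) ∩ C' ≠ ∅}.Finite)
    (hcocompact : CompactSpace (Quotient (MulAction.orbitRel Γ M)))
    (helliptic : ∀ γ : Γ, ∃ x : M, γ • x = x) :
    ∃ N : ℕ, 1 ≤ N ∧ ∀ γ : Γ, γ ^ N = 1 := by
  have : ContinuousConstSMul Γ M := ⟨hcont⟩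
  have : ProperlyDiscontinuousSMul Γ M :=
    ⟨fun hC hC' ↦ by
      simpa only [Set.image_smul, Set.nonempty_iff_ne_empty] using hproper _ _ hC hC'⟩
  have : CompactSpace (orbitRel.Quotient Γ M) := hcocompact
  obtain ⟨N, hN, hpow⟩ := proper_cocompact_action_all_elliptic_finite_exponent_general M Γ
  exact ⟨N, hN, fun γ ↦ hpow γ (helliptic γ)⟩
end

section
/- Let E be a finite-dimensional real inner product space of odd dimension, and let G be a group of linear isometries of E such that every nonidentity element of G fixes only the origin (i.e. for g ∈ G with g ≠ 1, g(v) = v implies v = 0; equivalently, G acts freely on the unit sphere of E). Then every nonidentity element of G equals −id, and consequently G is cyclic of order at most 2. -/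
/-!
In odd dimension a linear isometry `g` has a real eigenvalue, which must be `1` or `-1`, so `g ^ 2`
fixes a nonzero vector. In a group acting freely this forces `g ^ 2 = 1`; then `g` fixes every
`g v + v`, so `g v = -v` unless `g = 1`.
-/

open Module Polynomial

-- A polynomial without roots has the sign of its leading term both to the left and to the right
-- of all its roots, hence both signs at `0` when its degree is odd.
theorem exists_isRoot_of_odd_natDegree {p : ℝ[X]} (hp : Odd p.natDegree) : ∃ x, p.IsRoot x := by
  by_contra! hroot
  rcases le_total 0 p.leadingCoeff with hlead | hlead
  · have right : 0 < p.eval 0 :=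
      zero_lt_eval_of_roots_lt_of_leadingCoeff_nonneg (fun y hy ↦ (hroot y hy).elim) hlead
    have left : 0 < -p.eval 0 := by
      simpa [Int.negOnePow_odd _ ((Int.odd_coe_nat _).2 hp)] using
        zero_lt_negOnePow_mul_eval_of_lt_roots_of_leadingCoeff_nonneg
          (x := 0) (fun y hy ↦ (hroot y hy).elim) hlead
    linarith
  · have right : p.eval 0 < 0 :=
      eval_lt_zero_of_roots_lt_of_leadingCoeff_nonpos (fun y hy ↦ (hroot y hy).elim) hlead
    have left : -p.eval 0 < 0 := by
      simpa [Int.negOnePow_odd _ ((Int.odd_coe_nat _).2 hp)] using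
        negOnePow_mul_eval_lt_zero_of_lt_roots_of_leadingCoeff_nonpos
          (x := 0) (fun y hy ↦ (hroot y hy).elim) hlead
    linarith

instance : IsRealClosed ℝ :=
  .of_linearOrderedField (fun hx ↦ Real.isSquare_iff.2 hx) exists_isRoot_of_odd_natDegree

theorem exists_hasEigenvalue_of_odd_finrank {K V : Type*} [Field K] [IsRealClosed K]
    [AddCommGroup V] [Module K V] (hodd : Odd (finrank K V)) (f : End K V) :
    ∃ μ, f.HasEigenvalue μ := by
  have : Module.Finite K V := Module.finite_of_finrank_pos hodd.pos
  obtain ⟨μ, hμ⟩ := IsRealClosed.exists_isRoot_of_odd_natDegree (f := f.charpoly)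
    (by rwa [f.charpoly_natDegree])
  exact ⟨μ, (f.hasEigenvalue_iff_isRoot_charpoly μ).2 hμ⟩

theorem norm_eq_one_of_apply_eq_smul {𝕜 E : Type*} [NormedField 𝕜] [NormedAddCommGroup E]
    [NormedSpace 𝕜 E] {f : E →ₗᵢ[𝕜] E} {μ : 𝕜} {v : E} (hv : v ≠ 0) (hfv : f v = μ • v) :
    ‖μ‖ = 1 := by
  have hnorm : ‖μ‖ * ‖v‖ = ‖v‖ := by rw [← norm_smul, ← hfv, f.norm_map]
  exact (mul_eq_right₀ (norm_ne_zero_iff.2 hv)).1 hnorm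

theorem exists_ne_zero_apply_apply_eq_of_odd_finrank {E : Type*} [NormedAddCommGroup E]
    [NormedSpace ℝ E] (hodd : Odd (finrank ℝ E)) (f : E →ₗᵢ[ℝ] E) :
    ∃ v, v ≠ 0 ∧ f (f v) = v := by
  obtain ⟨μ, hμ⟩ := exists_hasEigenvalue_of_odd_finrank hodd f.toLinearMap
  obtain ⟨v, hv⟩ := hμ.exists_hasEigenvector
  have hfv : f v = μ • v := hv.apply_eq_smul
  have hμ_sq : μ * μ = 1 :=
    mul_self_eq_one_iff.2 (eq_or_eq_neg_of_abs_eq (norm_eq_one_of_apply_eq_smul hv.2 hfv))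
  exact ⟨v, hv.2, by rw [hfv, map_smul, hfv, smul_smul, hμ_sq, one_smul]⟩

theorem apply_eq_neg_of_involutive {A : Type*} [AddCommGroup A] {f : A →+ A}
    (hinv : Function.Involutive f) (hfix : ∀ a, f a = a → a = 0) (a : A) : f a = -a :=
  eq_neg_of_add_eq_zero_left (hfix (f a + a) (by rw [map_add, hinv a, add_comm]))

theorem apply_eq_neg_of_mem_of_free {E : Type*} [NormedAddCommGroup E] [NormedSpace ℝ E]
    (hodd : Odd (finrank ℝ E)) {G : Subgroup (E ≃ₗᵢ[ℝ] E)}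
    (hfree : ∀ g ∈ G, g ≠ 1 → ∀ v : E, g v = v → v = 0)
    {g : E ≃ₗᵢ[ℝ] E} (hg : g ∈ G) (hg_ne : g ≠ 1) (v : E) : g v = -v := by
  obtain ⟨w, hw_ne, hw⟩ := exists_ne_zero_apply_apply_eq_of_odd_finrank hodd g.toLinearIsometry
  have hsq : g * g = 1 := by
    by_contra hne
    exact hw_ne (hfree (g * g) (G.mul_mem hg hg) hne w hw)
  exact apply_eq_neg_of_involutive (f := (g.toLinearEquiv : E →+ E))
    (fun x ↦ DFunLike.congr_fun hsq x) (hfree g hg hg_ne) v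

theorem natCard_dvd_of_le_zpowers {A : Type*} [Group A] {H : Subgroup A} {z : A} {n : ℕ}
    (hz : z ^ n = 1) (hH : H ≤ Subgroup.zpowers z) : Nat.card H ∣ n :=
  (Subgroup.card_dvd_of_le hH).trans (Nat.card_zpowers z ▸ orderOf_dvd_of_pow_eq_one hz)

theorem group_of_isometries_free_on_odd_dim_space_general
    {E : Type*} [NormedAddCommGroup E] [NormedSpace ℝ E] (hodd : Odd (finrank ℝ E))
    (G : Subgroup (E ≃ₗᵢ[ℝ] E))
    (hfree : ∀ g ∈ G, g ≠ 1 → ∀ v : E, g v = v → v = 0) :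
    (∀ g ∈ G, g ≠ 1 → ∀ v : E, g v = -v) ∧ IsCyclic G ∧ Nat.card G ≤ 2 := by
  have hneg : ∀ g ∈ G, g ≠ 1 → ∀ v : E, g v = -v :=
    fun _ hg hg_ne ↦ apply_eq_neg_of_mem_of_free hodd hfree hg hg_ne
  have hle : G ≤ Subgroup.zpowers (LinearIsometryEquiv.neg ℝ) := by
    intro g hg
    by_cases hg_one : g = 1
    · exact hg_one ▸ one_mem _
    · have hg_neg : g = LinearIsometryEquiv.neg ℝ := LinearIsometryEquiv.ext (hneg g hg hg_one)
      exact hg_neg ▸ Subgroup.mem_zpowers _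
  have hneg_sq : (LinearIsometryEquiv.neg ℝ : E ≃ₗᵢ[ℝ] E) ^ 2 = 1 := by
    ext v
    simp [sq]
  exact ⟨hneg, Subgroup.isCyclic_of_le hle,
    Nat.le_of_dvd two_pos (natCard_dvd_of_le_zpowers hneg_sq hle)⟩

/-- If a group of linear isometries of an odd-dimensional real inner product space
is such that every nonidentity element fixes only the origin, then every
nonidentity element is `-id`, and the group is cyclic of order at most 2. -/
theorem group_of_isometries_free_on_odd_dim_space
    {E : Type*} [NormedAddCommGroup E] [InnerProductSpace ℝ E]
    [FiniteDimensional ℝ E] (hodd : Odd (Module.finrank ℝ E))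
    (G : Subgroup (E ≃ₗᵢ[ℝ] E))
    (hfree : ∀ g ∈ G, g ≠ 1 → ∀ v : E, g v = v → v = 0) :
    (∀ g ∈ G, g ≠ 1 → ∀ v : E, g v = -v) ∧ IsCyclic G ∧ Nat.card G ≤ 2 :=
  group_of_isometries_free_on_odd_dim_space_general hodd G hfree
end
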